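/- Assume (K0)–(K4). For a signed Borel measure μ on Ω set 𝒢(μ)(x) := ∫_Ω 𝔾(x,y) dμ(y). Then: (i) there is C > 0 such that ∫_Ω |𝒢(μ)| ≤ C |μ|(Ω) for every finite signed Borel measure μ on Ω; (ii) if μ is a signed Borel measure on Ω with ∫_Ω δ^γ d|μ| < ∞, then u := 𝒢(μ) ∈ L¹_loc(Ω) and u is the unique function in L¹_loc(Ω) satisfying ∫_Ω u ψ = ∫_Ω 𝒢(ψ) dμ for every ψ ∈ L∞_c(Ω); moreover ∫_K |u| ≤ (∫_Ω δ^γ d|μ|) · ‖δ^{−γ} 𝒢(χ_K)‖_{L∞(Ω)} for every compact K ⊂ Ω. -/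

import Mathlib

/-!
Everything rests on two kernel estimates, integrated by Tonelli's theorem.

* Since `𝔾(x,y) ≤ Λ |x - y|^{2s-n}` and `|z|^{2s-n}` is locally integrable, the columns `𝔾(·,y)`
  are bounded in `L¹(Ω)` uniformly in `y` (`lintegral_kernel_le`). Integrating against `|μ|`
  gives (i).
* If `K ⊆ Ω` is compact then `min (δ(x) δ(y) / |x - y|², 1)` is at most a multiple of `δ(x)` for
  `y ∈ K`: off the diagonal because `|x - y|` is bounded below, near it because `δ(x)` is.
  Therefore `𝒢(χ_K) ≤ C δ^γ` on `Ω` (`lintegral_kernel_compact_le`).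

A measure with `∫ δ^γ d|μ| < ∞` is s-finite on `Ω`, so Tonelli's theorem gives
`∫_K |𝒢(μ)| ≤ ∫_Ω 𝒢(χ_K) d|μ|`, and Fubini's theorem gives the weak formulation
(`potential_duality`). To get the norm in the compact estimate, `𝒢(χ_K) ≤ M δ^γ` with
`M = ‖δ^{-γ} 𝒢(χ_K)‖_{L∞}` is needed at every point of `Ω`, as `μ` may charge Lebesgue-null sets;
it propagates from a dense set by Fatou's lemma and (K4) (`lintegral_kernel_le_eLpNorm`).
Uniqueness is the fundamental lemma of the calculus of variations.
-/

open MeasureTheory Metric Set Filter Topology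

noncomputable section

abbrev Euc (n : ℕ) : Type := EuclideanSpace ℝ (Fin n)

/-- Distance to the boundary of `Ω`. -/
noncomputable def bdist {n : ℕ} (Ω : Set (Euc n)) (x : Euc n) : ℝ :=
  Metric.infDist x (frontier Ω)

/-- The two-sided model kernel `H(x,y)` of hypothesis (K2). -/
noncomputable def Hker {n : ℕ} (Ω : Set (Euc n)) (s γ : ℝ) (x y : Euc n) : ℝ :=
  dist x y ^ (2 * s - (n : ℝ)) *
    (min (bdist Ω x * bdist Ω y / dist x y ^ (2 : ℝ)) 1) ^ γ

/-- The Green operator `𝒢(f)(x) = ∫_Ω 𝔾(x,y) f(y) dy` of hypothesis (K0). -/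
noncomputable def Gop {n : ℕ} (Ω : Set (Euc n)) (G : Euc n → Euc n → ℝ)
    (f : Euc n → ℝ) (x : Euc n) : ℝ :=
  ∫ y in Ω, G x y * f y


/-! ### Estimates for the kernel -/

lemma bdist_nonneg {n : ℕ} (Ω : Set (Euc n)) (x : Euc n) : 0 ≤ bdist Ω x :=
  Metric.infDist_nonneg

lemma continuous_bdist {n : ℕ} (Ω : Set (Euc n)) : Continuous (bdist Ω) :=
  Metric.continuous_infDist_pt _

lemma bdist_pos {n : ℕ} (hn : 0 < n) {Ω : Set (Euc n)} (hΩo : IsOpen Ω)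
    (hΩb : Bornology.IsBounded Ω) {x : Euc n} (hx : x ∈ Ω) : 0 < bdist Ω x := by
  have : Nonempty (Fin n) := ⟨⟨0, hn⟩⟩
  have hne : (frontier Ω).Nonempty := by
    rw [nonempty_frontier_iff]
    refine ⟨⟨x, hx⟩, fun h => ?_⟩
    rw [h] at hΩb
    exact NormedSpace.unbounded_univ ℝ (Euc n) hΩb
  refine (Metric.infDist_pos_iff_notMem_closure hne).1 ?_
  rw [isClosed_frontier.closure_eq, hΩo.frontier_eq]
  exact fun h => h.2 hx

/-- The Riesz potential of a bounded set is bounded on that set, since `‖z‖ ^ (2s - n)` is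
integrable near the origin. -/
lemma riesz_lintegral_le {n : ℕ} (hn : 0 < n) {s : ℝ} (hs : 0 < s) {Ω : Set (Euc n)}
    (hΩb : Bornology.IsBounded Ω) :
    ∃ C : ENNReal, C ≠ ⊤ ∧ ∀ x ∈ Ω,
      ∫⁻ y in Ω, ENNReal.ofReal (dist x y ^ (2 * s - (n : ℝ))) ≤ C := by
  have : Nonempty (Fin n) := ⟨⟨0, hn⟩⟩
  set p : ℝ := 2 * s - (n : ℝ) with hp
  set R : ℝ := Metric.diam Ω + 1 with hR
  have hR0 : 0 < R := by have := Metric.diam_nonneg (s := Ω); linarith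
  have hint : IntegrableOn (fun z : Euc n => ‖z‖ ^ p) (ball 0 R) := by
    refine (integrableOn_fun_norm_addHaar (volume : Measure (Euc n))
      (f := fun t : ℝ => t ^ p)).2 ?_
    have h1 : IntegrableOn (fun t : ℝ => t ^ (2 * s - 1)) (Ioo 0 R) :=
      (intervalIntegral.integrableOn_Ioo_rpow_iff hR0).2 (by linarith)
    refine h1.congr_fun (fun t ht => ?_) measurableSet_Ioo
    have ht0 : 0 < t := ht.1
    simp only [finrank_euclideanSpace, Fintype.card_fin, smul_eq_mul]
    rw [← Real.rpow_natCast, ← Real.rpow_add ht0, Nat.cast_sub hn]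
    congr 1
    rw [hp]; push_cast; ring
  refine ⟨∫⁻ z in ball (0 : Euc n) R, ENNReal.ofReal (‖z‖ ^ p),
    (hint.lintegral_lt_top).ne, fun x hx => ?_⟩
  have hsub : Ω ⊆ ball x R := fun y hy => by
    have := Metric.dist_le_diam_of_mem hΩb hy hx
    rw [mem_ball]; linarith
  calc ∫⁻ y in Ω, ENNReal.ofReal (dist x y ^ p)
      ≤ ∫⁻ y in ball x R, ENNReal.ofReal (dist x y ^ p) := lintegral_mono_set hsub
    _ = ∫⁻ y, (ball (0 : Euc n) R).indicator
          (fun z => ENNReal.ofReal (‖z‖ ^ p)) (y - x) := by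
        rw [← lintegral_indicator measurableSet_ball]
        refine lintegral_congr fun y => ?_
        simp only [indicator, mem_ball, dist_eq_norm, sub_zero, norm_sub_rev x y]
    _ = ∫⁻ z in ball (0 : Euc n) R, ENNReal.ofReal (‖z‖ ^ p) := by
        rw [lintegral_sub_right_eq_self (fun z => (ball (0 : Euc n) R).indicator
          (fun z => ENNReal.ofReal (‖z‖ ^ p)) z) x, lintegral_indicator measurableSet_ball]
    _ ≤ _ := le_rfl

lemma Hker_le {n : ℕ} (Ω : Set (Euc n)) {s γ : ℝ} (hγ : 0 < γ) (x y : Euc n) :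
    Hker Ω s γ x y ≤ dist x y ^ (2 * s - (n : ℝ)) := by
  have h0 : 0 ≤ bdist Ω x * bdist Ω y / dist x y ^ (2 : ℝ) := by
    have := bdist_nonneg Ω x
    have := bdist_nonneg Ω y
    positivity
  unfold Hker
  refine mul_le_of_le_one_right (by positivity) ?_
  exact Real.rpow_le_one (le_min h0 zero_le_one) (min_le_right _ _) hγ.le

/-- When `y` stays in a compact subset of `Ω`, the model kernel vanishes like `δ(x) ^ γ` as `x`
approaches the boundary. -/
lemma Hker_le_bdist {n : ℕ} (hn : 0 < n) {Ω : Set (Euc n)} (hΩo : IsOpen Ω)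
    (hΩb : Bornology.IsBounded Ω) {s γ : ℝ} (hγ : 0 < γ) {K : Set (Euc n)} (hK : IsCompact K)
    (hKΩ : K ⊆ Ω) :
    ∃ A : ℝ, 0 ≤ A ∧ ∀ x, ∀ y ∈ K, x ≠ y →
      Hker Ω s γ x y ≤ A * bdist Ω x ^ γ * dist x y ^ (2 * s - (n : ℝ)) := by
  obtain ⟨d, hd0, hd⟩ : ∃ d, 0 < d ∧ ∀ y ∈ K, d ≤ bdist Ω y :=
    hK.exists_forall_le' (continuous_bdist Ω).continuousOn
      (fun y hy => bdist_pos hn hΩo hΩb (hKΩ hy))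
  obtain ⟨D, hD⟩ : ∃ D, ∀ y ∈ K, bdist Ω y ≤ D := by
    obtain ⟨D, hD⟩ := hK.bddAbove_image (continuous_bdist Ω).continuousOn
    exact ⟨D, fun y hy => hD (mem_image_of_mem _ hy)⟩
  set B : ℝ := 4 * |D| / d ^ 2 + 2 / d with hB
  have hB0 : 0 ≤ B := by positivity
  refine ⟨B ^ γ, by positivity, fun x y hy hxy => ?_⟩
  have hr : 0 < dist x y := dist_pos.2 hxy
  have hx0 := bdist_nonneg Ω x
  have hy0 := bdist_nonneg Ω y
  have hmin0 : 0 ≤ min (bdist Ω x * bdist Ω y / dist x y ^ (2 : ℝ)) 1 :=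
    le_min (by positivity) zero_le_one
  have hmin : min (bdist Ω x * bdist Ω y / dist x y ^ (2 : ℝ)) 1 ≤ B * bdist Ω x := by
    rcases le_or_gt (d / 2) (dist x y) with h | h
    · -- far from the diagonal the quotient is already of order `δ(x)`
      refine (min_le_left _ _).trans ?_
      have h1 : bdist Ω x * bdist Ω y / dist x y ^ (2 : ℝ)
          ≤ bdist Ω x * |D| / (d / 2) ^ 2 := by
        rw [Real.rpow_two]
        have := (hD y hy).trans (le_abs_self D)
        gcongr
      have h2 : bdist Ω x * |D| / (d / 2) ^ 2 = 4 * |D| / d ^ 2 * bdist Ω x := by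
        field_simp
        ring
      have h3 : 0 ≤ 2 / d * bdist Ω x := by positivity
      rw [hB, add_mul]; linarith
    · -- near the diagonal `x` is itself at distance at least `d / 2` from the boundary
      refine (min_le_right _ _).trans ?_
      have h1 : bdist Ω y ≤ bdist Ω x + dist y x := Metric.infDist_le_infDist_add_dist
      have h2 : d / 2 ≤ bdist Ω x := by
        have := hd y hy
        rw [dist_comm] at h1; linarith
      have h3 : 1 ≤ 2 / d * bdist Ω x := by
        rw [div_mul_eq_mul_div, le_div_iff₀ hd0]; linarith
      have h4 : 0 ≤ 4 * |D| / d ^ 2 * bdist Ω x := by positivity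
      rw [hB, add_mul]; linarith
  unfold Hker
  rw [mul_comm]
  gcongr
  rw [← Real.mul_rpow hB0 hx0]
  exact Real.rpow_le_rpow hmin0 hmin hγ.le

/-- The columns of the Green kernel are bounded in `L¹(Ω)`. -/
lemma lintegral_kernel_le {n : ℕ} (hn : 0 < n) {Ω : Set (Euc n)} {s γ Λ : ℝ}
    {G : Euc n → Euc n → ℝ} (hΩo : IsOpen Ω) (hΩb : Bornology.IsBounded Ω) (hs0 : 0 < s)
    (hγ0 : 0 < γ) (hΛ : 1 ≤ Λ)
    (hK2 : ∀ x ∈ Ω, ∀ y ∈ Ω, x ≠ y → G x y ≤ Λ * Hker Ω s γ x y) :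
    ∃ C : ENNReal, C ≠ ⊤ ∧ ∀ x ∈ Ω, ∫⁻ y in Ω, ENNReal.ofReal (G x y) ≤ C := by
  have : Nonempty (Fin n) := ⟨⟨0, hn⟩⟩
  obtain ⟨C, hC, hCle⟩ := riesz_lintegral_le hn hs0 hΩb
  refine ⟨ENNReal.ofReal Λ * C, ENNReal.mul_ne_top ENNReal.ofReal_ne_top hC, fun x hx => ?_⟩
  refine le_trans ?_ (mul_le_mul_right (hCle x hx) _)
  rw [← lintegral_const_mul' _ _ ENNReal.ofReal_ne_top]
  refine lintegral_mono_ae ?_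
  filter_upwards [ae_restrict_mem hΩo.measurableSet, Measure.ae_ne _ x] with y hy hxy
  rw [← ENNReal.ofReal_mul (by linarith)]
  refine ENNReal.ofReal_le_ofReal ((hK2 x hx y hy hxy.symm).trans ?_)
  exact mul_le_mul_of_nonneg_left (Hker_le Ω hγ0 x y) (by linarith)

/-- For `K ⊆ Ω` compact, `𝒢(χ_K)` is at most a multiple of `δ ^ γ` at every point of `Ω`. -/
lemma lintegral_kernel_compact_le {n : ℕ} (hn : 0 < n) {Ω : Set (Euc n)} {s γ Λ : ℝ}
    {G : Euc n → Euc n → ℝ} (hΩo : IsOpen Ω) (hΩb : Bornology.IsBounded Ω) (hs0 : 0 < s)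
    (hγ0 : 0 < γ) (hΛ : 1 ≤ Λ)
    (hK2 : ∀ x ∈ Ω, ∀ y ∈ Ω, x ≠ y → G x y ≤ Λ * Hker Ω s γ x y)
    {K : Set (Euc n)} (hK : IsCompact K) (hKΩ : K ⊆ Ω) :
    ∃ C : ENNReal, C ≠ ⊤ ∧ ∀ x ∈ Ω,
      ∫⁻ y in K, ENNReal.ofReal (G x y) ≤ C * ENNReal.ofReal (bdist Ω x ^ γ) := by
  have : Nonempty (Fin n) := ⟨⟨0, hn⟩⟩
  obtain ⟨C, hC, hCle⟩ := riesz_lintegral_le hn hs0 hΩb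
  obtain ⟨A, hA0, hA⟩ := Hker_le_bdist (s := s) hn hΩo hΩb hγ0 hK hKΩ
  have hLA : 0 ≤ Λ * A := mul_nonneg (by linarith) hA0
  refine ⟨ENNReal.ofReal (Λ * A) * C, ENNReal.mul_ne_top ENNReal.ofReal_ne_top hC,
    fun x hx => ?_⟩
  have hx0 : 0 ≤ bdist Ω x ^ γ := Real.rpow_nonneg (bdist_nonneg Ω x) _
  calc ∫⁻ y in K, ENNReal.ofReal (G x y)
      ≤ ∫⁻ y in K, ENNReal.ofReal (Λ * A * bdist Ω x ^ γ) *
          ENNReal.ofReal (dist x y ^ (2 * s - (n : ℝ))) := by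
        refine lintegral_mono_ae ?_
        filter_upwards [ae_restrict_mem hK.measurableSet, Measure.ae_ne _ x] with y hy hxy
        rw [← ENNReal.ofReal_mul (mul_nonneg hLA hx0)]
        refine ENNReal.ofReal_le_ofReal ((hK2 x hx y (hKΩ hy) hxy.symm).trans ?_)
        calc Λ * Hker Ω s γ x y
            ≤ Λ * (A * bdist Ω x ^ γ * dist x y ^ (2 * s - (n : ℝ))) :=
              mul_le_mul_of_nonneg_left (hA x y hy hxy.symm) (by linarith)
          _ = _ := by ring
    _ = ENNReal.ofReal (Λ * A * bdist Ω x ^ γ) *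
          ∫⁻ y in K, ENNReal.ofReal (dist x y ^ (2 * s - (n : ℝ))) :=
        lintegral_const_mul' _ _ ENNReal.ofReal_ne_top
    _ ≤ ENNReal.ofReal (Λ * A * bdist Ω x ^ γ) * C := by
        gcongr
        exact (lintegral_mono_set hKΩ).trans (hCle x hx)
    _ = _ := by rw [ENNReal.ofReal_mul hLA]; ring

/-! ### The essential supremum of `δ^{-γ} 𝒢(χ_K)` -/

lemma Gop_indicator {n : ℕ} {Ω : Set (Euc n)} (G : Euc n → Euc n → ℝ) {K : Set (Euc n)}
    (hK : MeasurableSet K) (hKΩ : K ⊆ Ω) (x : Euc n) :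
    Gop Ω G (K.indicator fun _ => 1) x = ∫ y in K, G x y := by
  unfold Gop
  have h : (fun y => G x y * K.indicator (fun _ => (1 : ℝ)) y) = K.indicator (G x) := by
    funext y
    by_cases hy : y ∈ K <;> simp [hy]
  rw [h, setIntegral_indicator hK, inter_eq_right.2 hKΩ]

lemma enorm_Gop_indicator {n : ℕ} {Ω : Set (Euc n)} {G : Euc n → Euc n → ℝ}
    (hGm : Measurable (Function.uncurry G)) (hGpos : ∀ x y, 0 ≤ G x y) {K : Set (Euc n)}
    (hK : MeasurableSet K) (hKΩ : K ⊆ Ω) {x : Euc n}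
    (hfin : ∫⁻ y in K, ENNReal.ofReal (G x y) ≠ ⊤) :
    ‖Gop Ω G (K.indicator fun _ => 1) x‖ₑ = ∫⁻ y in K, ENNReal.ofReal (G x y) := by
  have hm : Measurable (G x) := hGm.of_uncurry_left
  have hint : Integrable (G x) (volume.restrict K) :=
    (lintegral_ofReal_ne_top_iff_integrable hm.aestronglyMeasurable
      (ae_of_all _ (hGpos x))).1 hfin
  rw [Gop_indicator G hK hKΩ, Real.enorm_of_nonneg (integral_nonneg (hGpos x)),
    ofReal_integral_eq_lintegral_ofReal hint (ae_of_all _ (hGpos x))]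

lemma eLpNorm_Gop_lt_top {n : ℕ} {Ω : Set (Euc n)} {γ : ℝ} {G : Euc n → Euc n → ℝ}
    (hΩo : IsOpen Ω) (hδ : ∀ x ∈ Ω, 0 < bdist Ω x)
    (hGm : Measurable (Function.uncurry G)) (hGpos : ∀ x y, 0 ≤ G x y) {K : Set (Euc n)}
    (hK : MeasurableSet K) (hKΩ : K ⊆ Ω) {C : ENNReal} (hC : C ≠ ⊤)
    (hCle : ∀ x ∈ Ω, ∫⁻ y in K, ENNReal.ofReal (G x y) ≤ C * ENNReal.ofReal (bdist Ω x ^ γ)) :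
    eLpNorm (fun x => Gop Ω G (K.indicator fun _ => 1) x / bdist Ω x ^ γ) ⊤
      (volume.restrict Ω) < ⊤ := by
  rw [eLpNorm_exponent_top]
  refine lt_of_le_of_lt (eLpNormEssSup_le_of_ae_enorm_bound (C := C) ?_) hC.lt_top
  filter_upwards [ae_restrict_mem hΩo.measurableSet] with x hx
  have hpos : 0 < bdist Ω x ^ γ := Real.rpow_pos_of_pos (hδ x hx) γ
  have hfin : ∫⁻ y in K, ENNReal.ofReal (G x y) ≠ ⊤ :=
    ne_top_of_le_ne_top (ENNReal.mul_ne_top hC ENNReal.ofReal_ne_top) (hCle x hx)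
  rw [div_eq_mul_inv, enorm_mul, enorm_Gop_indicator hGm hGpos hK hKΩ hfin,
    Real.enorm_of_nonneg (inv_nonneg.2 hpos.le), ENNReal.ofReal_inv_of_pos hpos,
    ← div_eq_mul_inv]
  exact ENNReal.div_le_of_le_mul (hCle x hx)

/-- The bound of `𝒢(χ_K)` by its weighted Lebesgue-essential supremum holds at every point of
`Ω`, hence also almost everywhere for a measure that is singular to Lebesgue measure: the set
where it holds is dense, and `𝒢(χ_K)` is lower semicontinuous by Fatou's lemma and the continuity
of the kernel in its first variable. -/
lemma lintegral_kernel_le_eLpNorm {n : ℕ} {Ω : Set (Euc n)} {γ : ℝ} {G : Euc n → Euc n → ℝ}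
    (hγ0 : 0 < γ) (hΩo : IsOpen Ω) (hδ : ∀ x ∈ Ω, 0 < bdist Ω x)
    (hGm : Measurable (Function.uncurry G)) (hGpos : ∀ x y, 0 ≤ G x y)
    (hK4 : ∀ x ∈ closure Ω, ∀ u : ℕ → Euc n, (∀ j, u j ∈ Ω) → Tendsto u atTop (𝓝 x) →
      ∀ᵐ y ∂volume.restrict Ω, Tendsto (fun j => G (u j) y) atTop (𝓝 (G x y)))
    {K : Set (Euc n)} (hK : MeasurableSet K) (hKΩ : K ⊆ Ω) {C : ENNReal} (hC : C ≠ ⊤)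
    (hCle : ∀ x ∈ Ω, ∫⁻ y in K, ENNReal.ofReal (G x y) ≤ C * ENNReal.ofReal (bdist Ω x ^ γ))
    {x : Euc n} (hx : x ∈ Ω) :
    ∫⁻ y in K, ENNReal.ofReal (G x y) ≤
      eLpNorm (fun x => Gop Ω G (K.indicator fun _ => 1) x / bdist Ω x ^ γ) ⊤
        (volume.restrict Ω) * ENNReal.ofReal (bdist Ω x ^ γ) := by
  have hM := eLpNorm_Gop_lt_top hΩo hδ hGm hGpos hK hKΩ hC hCle
  set M := eLpNorm (fun x => Gop Ω G (K.indicator fun _ => 1) x / bdist Ω x ^ γ) ⊤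
    (volume.restrict Ω) with hMdef
  have hae : ∀ᵐ z ∂(volume : Measure (Euc n)), z ∈ Ω →
      ∫⁻ y in K, ENNReal.ofReal (G z y) ≤ M * ENNReal.ofReal (bdist Ω z ^ γ) := by
    rw [← ae_restrict_iff' hΩo.measurableSet]
    have h1 := ae_le_eLpNormEssSup (μ := volume.restrict Ω)
      (f := fun x => Gop Ω G (K.indicator fun _ => 1) x / bdist Ω x ^ γ)
    rw [← eLpNorm_exponent_top, ← hMdef] at h1
    filter_upwards [h1, ae_restrict_mem hΩo.measurableSet] with z hz hzΩ
    have hpos : 0 < bdist Ω z ^ γ := Real.rpow_pos_of_pos (hδ z hzΩ) γ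
    have hfin : ∫⁻ y in K, ENNReal.ofReal (G z y) ≠ ⊤ :=
      ne_top_of_le_ne_top (ENNReal.mul_ne_top hC ENNReal.ofReal_ne_top) (hCle z hzΩ)
    rw [← enorm_Gop_indicator hGm hGpos hK hKΩ hfin]
    calc ‖Gop Ω G (K.indicator fun _ => 1) z‖ₑ
        = ‖Gop Ω G (K.indicator fun _ => 1) z / bdist Ω z ^ γ * bdist Ω z ^ γ‖ₑ := by
          rw [div_mul_cancel₀ _ hpos.ne']
      _ = ‖Gop Ω G (K.indicator fun _ => 1) z / bdist Ω z ^ γ‖ₑ *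
            ENNReal.ofReal (bdist Ω z ^ γ) := by
          rw [enorm_mul, Real.enorm_of_nonneg hpos.le]
      _ ≤ _ := by gcongr
  obtain ⟨u, hu, hux⟩ := mem_closure_iff_seq_limit.1
    ((Measure.dense_of_ae hae).open_subset_closure_inter hΩo hx)
  have hlim : ∀ᵐ y ∂volume.restrict K,
      ENNReal.ofReal (G x y) = liminf (fun j => ENNReal.ofReal (G (u j) y)) atTop := by
    filter_upwards [ae_restrict_of_ae_restrict_of_subset hKΩ
      (hK4 x (subset_closure hx) u (fun j => (hu j).1) hux)] with y hy
    exact ((ENNReal.tendsto_ofReal hy).liminf_eq).symm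
  have hδlim : Tendsto (fun j => M * ENNReal.ofReal (bdist Ω (u j) ^ γ)) atTop
      (𝓝 (M * ENNReal.ofReal (bdist Ω x ^ γ))) := by
    refine ENNReal.Tendsto.const_mul (ENNReal.tendsto_ofReal ?_) (Or.inr hM.ne)
    exact (((continuous_bdist Ω).tendsto x).comp hux).rpow_const (Or.inr hγ0.le)
  rw [lintegral_congr_ae hlim]
  refine (lintegral_liminf_le fun j => (hGm.of_uncurry_left).ennreal_ofReal).trans ?_
  rw [← hδlim.liminf_eq]
  exact liminf_le_liminf (Eventually.of_forall fun j => (hu j).2 (hu j).1)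

/-! ### Potentials of positive measures -/

/-- A measure integrating the positive weight `δ ^ γ` is s-finite on `Ω`, so that Fubini's theorem
applies to it. -/
lemma sFinite_restrict_of_weight {n : ℕ} {Ω : Set (Euc n)} {γ : ℝ} (hγ0 : 0 < γ)
    (hΩo : IsOpen Ω) (hδ : ∀ x ∈ Ω, 0 < bdist Ω x) {ν : Measure (Euc n)}
    (hν : ∫⁻ x in Ω, ENNReal.ofReal (bdist Ω x ^ γ) ∂ν ≠ ⊤) : SFinite (ν.restrict Ω) := by
  have hm : Measurable fun x => ENNReal.ofReal (bdist Ω x ^ γ) :=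
    (((continuous_bdist Ω).rpow_const fun _ => Or.inr hγ0.le).measurable).ennreal_ofReal
  have hfin := isFiniteMeasure_withDensity hν
  rw [← withDensity_inv_same (μ := ν.restrict Ω) hm ?_ (ae_of_all _ fun _ => ENNReal.ofReal_ne_top)]
  · infer_instance
  · filter_upwards [ae_restrict_mem hΩo.measurableSet] with x hx
    exact ne_of_gt (ENNReal.ofReal_pos.2 (Real.rpow_pos_of_pos (hδ x hx) γ))

/-- Tonelli's theorem for the Green potential of a signed measure. -/
lemma lintegral_enorm_potential_le {n : ℕ} {Ω : Set (Euc n)} {G : Euc n → Euc n → ℝ}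
    (hGm : Measurable (Function.uncurry G)) (hGpos : ∀ x y, 0 ≤ G x y)
    (hGsym : ∀ x y, G x y = G y x) (μp μn : Measure (Euc n)) [SFinite (μp.restrict Ω)]
    [SFinite (μn.restrict Ω)] {u : Euc n → ℝ}
    (hu : ∀ x, u x = (∫ y in Ω, G x y ∂μp) - ∫ y in Ω, G x y ∂μn) (K : Set (Euc n)) :
    ∫⁻ x in K, ‖u x‖ₑ ≤
      ∫⁻ y in Ω, (∫⁻ x in K, ENNReal.ofReal (G y x)) ∂(μp + μn) := by
  have key : ∀ ν : Measure (Euc n), SFinite (ν.restrict Ω) →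
      ∫⁻ x in K, ∫⁻ y in Ω, ENNReal.ofReal (G x y) ∂ν =
        ∫⁻ y in Ω, (∫⁻ x in K, ENNReal.ofReal (G y x)) ∂ν := by
    intro ν hν
    rw [lintegral_lintegral_swap hGm.ennreal_ofReal.aemeasurable]
    simp_rw [fun x y => hGsym x y]
  have hle : ∀ ν : Measure (Euc n), ∀ x,
      ‖∫ y in Ω, G x y ∂ν‖ₑ ≤ ∫⁻ y in Ω, ENNReal.ofReal (G x y) ∂ν := by
    intro ν x
    refine (enorm_integral_le_lintegral_enorm _).trans_eq (lintegral_congr fun y => ?_)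
    exact Real.enorm_of_nonneg (hGpos x y)
  have hm : Measurable fun x => ∫⁻ y in Ω, ENNReal.ofReal (G x y) ∂μp :=
    hGm.ennreal_ofReal.lintegral_prod_right'
  rw [Measure.restrict_add, lintegral_add_measure, ← key μp inferInstance,
    ← key μn inferInstance, ← lintegral_add_left hm]
  refine lintegral_mono fun x => ?_
  rw [hu]
  exact (enorm_sub_le).trans (add_le_add (hle μp x) (hle μn x))

lemma stronglyMeasurable_potential {n : ℕ} {Ω : Set (Euc n)} {G : Euc n → Euc n → ℝ}
    (hGm : Measurable (Function.uncurry G)) (μp μn : Measure (Euc n)) [SFinite (μp.restrict Ω)]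
    [SFinite (μn.restrict Ω)] {u : Euc n → ℝ}
    (hu : ∀ x, u x = (∫ y in Ω, G x y ∂μp) - ∫ y in Ω, G x y ∂μn) : StronglyMeasurable u := by
  rw [funext hu]
  exact (hGm.stronglyMeasurable.integral_prod_right (ν := μp.restrict Ω)).sub
    (hGm.stronglyMeasurable.integral_prod_right (ν := μn.restrict Ω))

/-- Duality between the Green potential of a positive measure and the Green operator, by Fubini's
theorem. -/
lemma potential_duality {n : ℕ} {Ω : Set (Euc n)} {γ : ℝ} {G : Euc n → Euc n → ℝ}
    (hΩo : IsOpen Ω) (hGm : Measurable (Function.uncurry G)) (hGpos : ∀ x y, 0 ≤ G x y)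
    (hGsym : ∀ x y, G x y = G y x) {ν : Measure (Euc n)} (hνs : SFinite (ν.restrict Ω))
    (hν : ∫⁻ x in Ω, ENNReal.ofReal (bdist Ω x ^ γ) ∂ν ≠ ⊤)
    {ψ : Euc n → ℝ} (hψ : Measurable ψ) {B : ℝ} (hB : ∀ x, |ψ x| ≤ B)
    {C : ENNReal} (hC : C ≠ ⊤)
    (hCle : ∀ x ∈ Ω, ∫⁻ y in tsupport ψ, ENNReal.ofReal (G x y) ≤
      C * ENNReal.ofReal (bdist Ω x ^ γ)) :
    IntegrableOn (fun x => (∫ y in Ω, G x y ∂ν) * ψ x) Ω ∧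
      ∫ x in Ω, (∫ y in Ω, G x y ∂ν) * ψ x = ∫ y in Ω, Gop Ω G ψ y ∂ν := by
  have hm : Measurable (Function.uncurry fun x y => G x y * ψ x) :=
    hGm.mul (hψ.comp measurable_fst)
  have hint : Integrable (Function.uncurry fun x y => G x y * ψ x)
      ((volume.restrict Ω).prod (ν.restrict Ω)) := by
    refine ⟨hm.aestronglyMeasurable, ?_⟩
    rw [HasFiniteIntegral, lintegral_prod_symm _ hm.enorm.aemeasurable]
    have hpt : ∀ y ∈ Ω, ∫⁻ x in Ω, ‖Function.uncurry (fun x y => G x y * ψ x) (x, y)‖ₑ ≤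
        ENNReal.ofReal B * C * ENNReal.ofReal (bdist Ω y ^ γ) := by
      intro y hy
      calc ∫⁻ x in Ω, ‖Function.uncurry (fun x y => G x y * ψ x) (x, y)‖ₑ
          ≤ ∫⁻ x, (tsupport ψ).indicator
              (fun x => ENNReal.ofReal B * ENNReal.ofReal (G y x)) x := by
            refine (lintegral_mono fun x => ?_).trans (setLIntegral_le_lintegral _ _)
            by_cases hx : x ∈ tsupport ψ
            · simp only [Function.uncurry_apply_pair, indicator_of_mem hx, enorm_mul]
              rw [mul_comm, Real.enorm_of_nonneg (hGpos x y), hGsym x y,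
                Real.enorm_eq_ofReal_abs]
              gcongr
              exact hB x
            · simp [image_eq_zero_of_notMem_tsupport hx]
        _ = ENNReal.ofReal B * ∫⁻ x in tsupport ψ, ENNReal.ofReal (G y x) := by
            rw [lintegral_indicator (isClosed_tsupport ψ).measurableSet,
              lintegral_const_mul' _ _ ENNReal.ofReal_ne_top]
        _ ≤ _ := by
            rw [mul_assoc]
            gcongr
            exact hCle y hy
    refine (setLIntegral_mono' hΩo.measurableSet hpt).trans_lt ?_
    have hBC : ENNReal.ofReal B * C ≠ ⊤ := ENNReal.mul_ne_top ENNReal.ofReal_ne_top hC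
    rw [lintegral_const_mul' _ _ hBC]
    exact ENNReal.mul_lt_top hBC.lt_top hν.lt_top
  have hmul : ∀ x, (∫ y in Ω, G x y ∂ν) * ψ x = ∫ y in Ω, G x y * ψ x ∂ν :=
    fun x => (integral_mul_const _ _).symm
  simp_rw [hmul]
  refine ⟨hint.integral_prod_left, ?_⟩
  rw [integral_integral_swap hint]
  unfold Gop
  simp_rw [fun x y => hGsym x y]

/-- measure data.  A signed measure is encoded as the difference of
two mutually singular (positive) measures `μp - μn`, with total variation
`μp + μn`.  Part (i): `𝒢 : 𝓜(Ω) → L¹(Ω)`.  Part (ii): for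
`μ ∈ 𝓜(Ω, δ^γ)`, `u = 𝒢(μ)` is the unique local-L¹ weak-dual solution and
satisfies the compact estimate. -/
theorem statement7 {n : ℕ} (Ω : Set (Euc n)) (s γ Λ : ℝ) (G : Euc n → Euc n → ℝ)
    (hΩo : IsOpen Ω) (hΩb : Bornology.IsBounded Ω) (hΩne : Ω.Nonempty)
    (hs0 : 0 < s) (hs1 : s ≤ 1) (hγ0 : 0 < γ) (hγ1 : γ ≤ 1) (hsn : 2 * s ≤ (n : ℝ))
    (hGm : Measurable (Function.uncurry G)) (hGpos : ∀ x y, 0 ≤ G x y)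
    (hGsym : ∀ x y, G x y = G y x) (hΛ : 1 ≤ Λ)
    (hK2 : ∀ x ∈ Ω, ∀ y ∈ Ω, x ≠ y →
      Λ⁻¹ * Hker Ω s γ x y ≤ G x y ∧ G x y ≤ Λ * Hker Ω s γ x y)
    (hK4 : ∀ x ∈ closure Ω, ∀ u : ℕ → Euc n, (∀ j, u j ∈ Ω) → Tendsto u atTop (𝓝 x) →
      ∀ᵐ y ∂volume.restrict Ω, Tendsto (fun j => G (u j) y) atTop (𝓝 (G x y))) :
    (∃ C : ℝ, 0 < C ∧ ∀ μp μn : Measure (Euc n), IsFiniteMeasure μp → IsFiniteMeasure μn →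
        μp ⟂ₘ μn →
        ∀ u : Euc n → ℝ, (∀ x, u x = (∫ y in Ω, G x y ∂μp) - ∫ y in Ω, G x y ∂μn) →
          IntegrableOn u Ω ∧ ∫ x in Ω, |u x| ≤ C * ((μp Ω).toReal + (μn Ω).toReal)) ∧
    (∀ μp μn : Measure (Euc n), μp ⟂ₘ μn →
        (∫⁻ x in Ω, ENNReal.ofReal (bdist Ω x ^ γ) ∂(μp + μn)) < ⊤ →
        ∀ u : Euc n → ℝ, (∀ x, u x = (∫ y in Ω, G x y ∂μp) - ∫ y in Ω, G x y ∂μn) →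
          LocallyIntegrableOn u Ω ∧
          (∀ ψ : Euc n → ℝ, Measurable ψ → (∃ M, ∀ x, |ψ x| ≤ M) →
            IsCompact (tsupport ψ) → tsupport ψ ⊆ Ω →
            ∫ x in Ω, u x * ψ x =
              (∫ y in Ω, Gop Ω G ψ y ∂μp) - ∫ y in Ω, Gop Ω G ψ y ∂μn) ∧
          (∀ v : Euc n → ℝ, LocallyIntegrableOn v Ω →
            (∀ ψ : Euc n → ℝ, Measurable ψ → (∃ M, ∀ x, |ψ x| ≤ M) →
              IsCompact (tsupport ψ) → tsupport ψ ⊆ Ω →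
              ∫ x in Ω, v x * ψ x =
                (∫ y in Ω, Gop Ω G ψ y ∂μp) - ∫ y in Ω, Gop Ω G ψ y ∂μn) →
            v =ᵐ[volume.restrict Ω] u) ∧
          (∀ K : Set (Euc n), IsCompact K → K ⊆ Ω →
            eLpNorm (fun x => Gop Ω G (K.indicator fun _ => 1) x / bdist Ω x ^ γ) ⊤
                (volume.restrict Ω) < ⊤ ∧
            ENNReal.ofReal (∫ x in K, |u x|) ≤
              (∫⁻ x in Ω, ENNReal.ofReal (bdist Ω x ^ γ) ∂(μp + μn)) *
                eLpNorm (fun x => Gop Ω G (K.indicator fun _ => 1) x / bdist Ω x ^ γ) ⊤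
                  (volume.restrict Ω))) := by
  have hn : 0 < n := by
    have : (0 : ℝ) < n := by linarith
    exact_mod_cast this
  have hK2' : ∀ x ∈ Ω, ∀ y ∈ Ω, x ≠ y → G x y ≤ Λ * Hker Ω s γ x y :=
    fun x hx y hy hxy => (hK2 x hx y hy hxy).2
  have hδ : ∀ x ∈ Ω, 0 < bdist Ω x := fun x hx => bdist_pos hn hΩo hΩb hx
  refine ⟨?_, ?_⟩
  · obtain ⟨C, hC, hCle⟩ := lintegral_kernel_le hn hΩo hΩb hs0 hγ0 hΛ hK2'
    refine ⟨C.toReal + 1, by positivity, ?_⟩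
    intro μp μn hμp hμn _ u hu
    have hbound : ∫⁻ x in Ω, ‖u x‖ₑ ≤ C * (μp Ω + μn Ω) := by
      refine (lintegral_enorm_potential_le hGm hGpos hGsym μp μn hu Ω).trans ?_
      refine (setLIntegral_mono' hΩo.measurableSet hCle).trans_eq ?_
      rw [setLIntegral_const, Measure.add_apply]
    have hfin : C * (μp Ω + μn Ω) ≠ ⊤ :=
      ENNReal.mul_ne_top hC (ENNReal.add_ne_top.2 ⟨measure_ne_top _ _, measure_ne_top _ _⟩)
    have hint : IntegrableOn u Ω :=
      ⟨(stronglyMeasurable_potential hGm μp μn hu).aestronglyMeasurable,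
        hbound.trans_lt hfin.lt_top⟩
    refine ⟨hint, ?_⟩
    have h1 : ∫ x in Ω, |u x| = (∫⁻ x in Ω, ‖u x‖ₑ).toReal :=
      integral_norm_eq_lintegral_enorm hint.aestronglyMeasurable
    have h2 := ENNReal.toReal_mono hfin hbound
    rw [ENNReal.toReal_mul, ENNReal.toReal_add (measure_ne_top _ _) (measure_ne_top _ _)] at h2
    rw [h1]
    refine h2.trans (mul_le_mul_of_nonneg_right (by linarith) (by positivity))
  · intro μp μn _ hμ u hu
    have hsum := hμ.ne
    rw [Measure.restrict_add, lintegral_add_measure] at hsum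
    have hwp := (ENNReal.add_ne_top.1 hsum).1
    have hwn := (ENNReal.add_ne_top.1 hsum).2
    have hsp : SFinite (μp.restrict Ω) := sFinite_restrict_of_weight hγ0 hΩo hδ hwp
    have hsn' : SFinite (μn.restrict Ω) := sFinite_restrict_of_weight hγ0 hΩo hδ hwn
    have hmeas := stronglyMeasurable_potential hGm μp μn hu
    have hcpt : ∀ K : Set (Euc n), IsCompact K → K ⊆ Ω →
        eLpNorm (fun x => Gop Ω G (K.indicator fun _ => 1) x / bdist Ω x ^ γ) ⊤
            (volume.restrict Ω) < ⊤ ∧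
        ∫⁻ x in K, ‖u x‖ₑ ≤
          (∫⁻ x in Ω, ENNReal.ofReal (bdist Ω x ^ γ) ∂(μp + μn)) *
            eLpNorm (fun x => Gop Ω G (K.indicator fun _ => 1) x / bdist Ω x ^ γ) ⊤
              (volume.restrict Ω) := by
      intro K hK hKΩ
      obtain ⟨C, hC, hCle⟩ :=
        lintegral_kernel_compact_le hn hΩo hΩb hs0 hγ0 hΛ hK2' hK hKΩ
      have hM := eLpNorm_Gop_lt_top hΩo hδ hGm hGpos hK.measurableSet hKΩ hC hCle
      refine ⟨hM, (lintegral_enorm_potential_le hGm hGpos hGsym μp μn hu K).trans ?_⟩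
      rw [mul_comm, ← lintegral_const_mul' _ _ hM.ne]
      exact setLIntegral_mono' hΩo.measurableSet fun y hy =>
        lintegral_kernel_le_eLpNorm hγ0 hΩo hδ hGm hGpos hK4 hK.measurableSet hKΩ hC hCle hy
    have hloc : LocallyIntegrableOn u Ω := by
      refine (locallyIntegrableOn_iff hΩo.isLocallyClosed).2 fun K hKΩ hK => ?_
      exact ⟨hmeas.aestronglyMeasurable,
        (hcpt K hK hKΩ).2.trans_lt (ENNReal.mul_lt_top hμ (hcpt K hK hKΩ).1)⟩
    have hweak : ∀ ψ : Euc n → ℝ, Measurable ψ → (∃ M, ∀ x, |ψ x| ≤ M) →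
        IsCompact (tsupport ψ) → tsupport ψ ⊆ Ω →
        IntegrableOn (fun x => u x * ψ x) Ω ∧ ∫ x in Ω, u x * ψ x =
          (∫ y in Ω, Gop Ω G ψ y ∂μp) - ∫ y in Ω, Gop Ω G ψ y ∂μn := by
      intro ψ hψ hψb hψc hψΩ
      obtain ⟨B, hB⟩ := hψb
      obtain ⟨C, hC, hCle⟩ :=
        lintegral_kernel_compact_le hn hΩo hΩb hs0 hγ0 hΛ hK2' hψc hψΩ
      obtain ⟨hip, hep⟩ := potential_duality hΩo hGm hGpos hGsym hsp hwp hψ hB hC hCle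
      obtain ⟨hin, hen⟩ := potential_duality hΩo hGm hGpos hGsym hsn' hwn hψ hB hC hCle
      have heq : (fun x => u x * ψ x) = fun x =>
          (∫ y in Ω, G x y ∂μp) * ψ x - (∫ y in Ω, G x y ∂μn) * ψ x := by
        funext x
        rw [hu, sub_mul]
      rw [heq, ← hep, ← hen]
      exact ⟨hip.sub hin, integral_sub hip hin⟩
    refine ⟨hloc, fun ψ h1 h2 h3 h4 => (hweak ψ h1 h2 h3 h4).2, ?_, ?_⟩
    · intro v hv hvweak
      have hzero := hΩo.ae_eq_zero_of_integral_contDiff_smul_eq_zero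
        (μ := (volume : Measure (Euc n))) (hv.sub hloc) ?_
      · rw [Filter.EventuallyEq, ae_restrict_iff' hΩo.measurableSet]
        filter_upwards [hzero] with x hx hxΩ
        exact sub_eq_zero.1 (hx hxΩ)
      · intro g hg hgc hgΩ
        have hgcont : Continuous g := hg.continuous
        have hgb : ∃ M, ∀ x, |g x| ≤ M := hgc.exists_bound_of_continuous hgcont
        have hu' := hweak g hgcont.measurable hgb hgc hgΩ
        have hv' := hvweak g hgcont.measurable hgb hgc hgΩ
        have hvi : IntegrableOn (fun x => v x * g x) Ω := by
          have h1 : IntegrableOn v (tsupport g) :=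
            hv.integrableOn_compact_subset hgΩ hgc
          have h2 : IntegrableOn (fun x => v x * g x) (tsupport g) :=
            h1.mul_continuousOn hgcont.continuousOn hgc
          have h3 : Integrable (fun x => v x * g x) := by
            refine (integrableOn_iff_integrable_of_support_subset fun x hx => ?_).1 h2
            exact subset_tsupport g fun h0 => hx (by simp [h0])
          exact h3.integrableOn
        have hset : ∫ x, g x • (v - u) x = ∫ x in Ω, (v x * g x - u x * g x) := by
          rw [setIntegral_eq_integral_of_forall_compl_eq_zero]
          · refine integral_congr_ae (ae_of_all _ fun x => ?_)
            simp only [Pi.sub_apply, smul_eq_mul]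
            ring
          · intro x hx
            rw [image_eq_zero_of_notMem_tsupport fun h => hx (hgΩ h)]
            ring
        rw [hset, integral_sub hvi hu'.1, hv', hu'.2, sub_self]
    · intro K hK hKΩ
      refine ⟨(hcpt K hK hKΩ).1, le_trans (le_of_eq ?_) (hcpt K hK hKΩ).2⟩
      exact ofReal_integral_norm_eq_lintegral_enorm
        (hloc.integrableOn_compact_subset hKΩ hK)
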